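/- Let M be a real m×d matrix and D a real d×n matrix, and suppose M satisfies the D-RIP of order 2k with constant δ_{2k}^D < 1. Let y = M x₀ + e where ‖e‖₂ ≤ ε and x₀ = D α₀ with ‖α₀‖₀ ≤ k. Then for any α̂ ∈ ℝⁿ with ‖α̂‖₀ ≤ k and ‖y − M D α̂‖₂ ≤ ε (in particular, for any minimizer of ‖α‖₀ subject to ‖y − M D α‖₂ ≤ ε), the recovered signal x̂ = D α̂ satisfies ‖x₀ − x̂‖₂ ≤ 2ε / √(1 − δ_{2k}^D). -/

import Mathlib

/-- ℓ₀ "norm": the number of nonzero entries of a vector. -/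
noncomputable def l0norm {n : ℕ} (α : Fin n → ℝ) : ℕ :=
  (Finset.univ.filter fun i => α i ≠ 0).card

/-- Euclidean (ℓ₂) norm of a vector. -/
noncomputable def norm2 {n : ℕ} (x : Fin n → ℝ) : ℝ :=
  Real.sqrt (∑ i, x i ^ 2)

theorem norm2_eq_norm {n : ℕ} (x : Fin n → ℝ) : norm2 x = ‖WithLp.toLp 2 x‖ := by
  simp [norm2, EuclideanSpace.norm_eq]

theorem l0norm_sub_le {n : ℕ} (a b : Fin n → ℝ) : l0norm (a - b) ≤ l0norm a + l0norm b := by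
  classical
  unfold l0norm
  refine le_trans (Finset.card_le_card ?_) (Finset.card_union_le _ _)
  intro i
  simp only [Finset.mem_filter, Finset.mem_univ, true_and, Finset.mem_union, Pi.sub_apply]
  intro h
  by_contra hc
  push Not at hc
  exact h (by rw [hc.1, hc.2, sub_zero])

/-- Stability of signal recovery under the D-RIP: if `M` satisfies the D-RIP of
order `2k` with constant `δ < 1`, `y = Mx₀ + e` with `‖e‖₂ ≤ ε` and
`x₀ = Dα₀`, `‖α₀‖₀ ≤ k`, then for any `αhat` with `‖αhat‖₀ ≤ k` and
`‖y − MDαhat‖₂ ≤ ε`, the recovered signal `xhat = Dαhat` satisfies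
`‖x₀ − xhat‖₂ ≤ 2ε/√(1 − δ)`. -/
theorem Drip_signal_stability
    {m d n : ℕ} (M : Matrix (Fin m) (Fin d) ℝ) (D : Matrix (Fin d) (Fin n) ℝ)
    (k : ℕ) (δ ε : ℝ) (hδ1 : δ < 1)
    (hDRIP : ∀ x : Fin d → ℝ,
      (∃ α : Fin n → ℝ, l0norm α ≤ 2 * k ∧ x = D.mulVec α) →
      (1 - δ) * (norm2 x) ^ 2 ≤ (norm2 (M.mulVec x)) ^ 2 ∧
      (norm2 (M.mulVec x)) ^ 2 ≤ (1 + δ) * (norm2 x) ^ 2)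
    (α₀ : Fin n → ℝ) (hα₀ : l0norm α₀ ≤ k)
    (x₀ : Fin d → ℝ) (hx₀ : x₀ = D.mulVec α₀)
    (e : Fin m → ℝ) (he : norm2 e ≤ ε)
    (y : Fin m → ℝ) (hy : y = M.mulVec x₀ + e)
    (αhat : Fin n → ℝ) (hαh : l0norm αhat ≤ k)
    (hfeas : norm2 (y - M.mulVec (D.mulVec αhat)) ≤ ε) :
    norm2 (x₀ - D.mulVec αhat) ≤ 2 * ε / Real.sqrt (1 - δ) := by
  have h1 := (hDRIP (x₀ - D.mulVec αhat) ⟨α₀ - αhat, by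
    have := l0norm_sub_le α₀ αhat
    omega, by rw [hx₀, Matrix.mulVec_sub]⟩).1
  have h2 : norm2 (M.mulVec (x₀ - D.mulVec αhat)) ≤ 2 * ε := by
    have h3 : M.mulVec (x₀ - D.mulVec αhat) = (y - M.mulVec (D.mulVec αhat)) - e := by
      rw [hy, Matrix.mulVec_sub]
      abel
    rw [h3]
    rw [norm2_eq_norm] at he hfeas ⊢
    rw [WithLp.toLp_sub]
    have := norm_sub_le (WithLp.toLp 2 (y - M.mulVec (D.mulVec αhat))) (WithLp.toLp 2 e)
    linarith
  have hpos : 0 < 1 - δ := by linarith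
  have hn : 0 ≤ norm2 (M.mulVec (x₀ - D.mulVec αhat)) := Real.sqrt_nonneg _
  rw [le_div_iff₀ (Real.sqrt_pos.mpr hpos)]
  refine le_trans (abs_le_of_sq_le_sq' ?_ hn).2 h2
  rw [mul_pow, Real.sq_sqrt hpos.le]
  linarith
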